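/- arXiv:math/0312175 — 3 statements merged into one kernel-verified Lean document; each statement's English description precedes it below -/
import Mathlib

section
/- Let M be a paracompact normal topological space, π : Y → M a continuous surjection from a topological space Y, and suppose there is an open cover {U_α}_{α∈I} of M together with continuous sections s_α : U_α → Y of π. Let (λ,Y,M) be a ℤ-bundle 0-gerbe whose cocycle λ : Y^{[2]} → ℤ is continuous (Y^{[2]} carrying the subspace topology of Y × Y and ℤ the discrete topology). Then there exists a continuous ℤ-curving for λ, i.e. a continuous f : Y → ℝ with f(y₂) − f(y₁) = λ(y₁,y₂) for all (y₁,y₂) ∈ Y^{[2]}; moreover the ℤ-curving is unique up to the pullback of a globally defined real function on the base: for any two continuous ℤ-curvings f, f′ of λ there is a continuous u : M → ℝ with f′ = f + u∘π. (Existence is proved using a partition of unity {φ_α} subordinate to {U_α} via f(y) = Σ_α φ_α(π(y))·λ(s_α(π(y)),y).) -/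
/-!
Pull a partition of unity `ρ` subordinate to `U` back along `π` and set
`f y = ∑ᶠ α, ρ α (π y) * λ (s α (π y), y)`. Each coefficient `y ↦ λ (s α (π y), y)` is continuous
on `π ⁻¹' U α`, so `f` is continuous. By the cocycle identity the coefficients at `y₂` and `y₁`
in the same fibre differ by `λ (y₁, y₂)` independently of `α`, and the weights sum to one, so `f`
is a curving. For two curvings, `f' - f` is constant on the fibres of `π`, hence descends to `M`,
and the local sections show that the descended function is continuous.
-/

/-- The pullback of a partition of unity along a continuous map. -/
def pullbackPartition {ι Y M : Type*} [TopologicalSpace Y] [TopologicalSpace M]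
    (ρ : PartitionOfUnity ι M Set.univ) (π : C(Y, M)) : PartitionOfUnity ι Y Set.univ where
  toFun i := (ρ i).comp π
  locallyFinite' := ρ.locallyFinite.preimage_continuous π.continuous
  nonneg' i y := ρ.nonneg i (π y)
  sum_eq_one' y _ := ρ.sum_eq_one (Set.mem_univ (π y))
  sum_le_one' y := ρ.sum_le_one (π y)

/-- Over a paracompact normal base `M`, a continuous `ℤ`-bundle 0-gerbe
`(λ, Y, M)` whose projection is a continuous surjection admitting continuous local
sections over an open cover has a continuous `ℤ`-curving `f : Y → ℝ` (constructed using a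
partition of unity), and any two continuous `ℤ`-curvings differ by the pullback of a
continuous real function on the base. -/
theorem int_bundle_zero_gerbe_has_curving
    {Y M ι : Type*} [TopologicalSpace Y] [TopologicalSpace M]
    [ParacompactSpace M] [NormalSpace M]
    (π : Y → M) (hπcont : Continuous π) (hπsurj : Function.Surjective π)
    (U : ι → Set M) (hUopen : ∀ α, IsOpen (U α)) (hUcover : (⋃ α, U α) = Set.univ)
    (s : ι → M → Y) (hscont : ∀ α, ContinuousOn (s α) (U α))
    (hsec : ∀ α, ∀ m ∈ U α, π (s α m) = m)
    (lam : Y → Y → ℤ)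
    (hlamcont : Continuous fun p : {p : Y × Y // π p.1 = π p.2} => lam p.1.1 p.1.2)
    (hcoc : ∀ y₁ y₂ y₃, π y₁ = π y₂ → π y₂ = π y₃ →
      lam y₁ y₂ + lam y₂ y₃ = lam y₁ y₃) :
    -- existence of a continuous ℤ-curving
    (∃ f : Y → ℝ, Continuous f ∧
      ∀ y₁ y₂, π y₁ = π y₂ → f y₂ - f y₁ = (lam y₁ y₂ : ℝ)) ∧
    -- uniqueness up to the pullback of a continuous function on the base
    (∀ f f' : Y → ℝ, Continuous f → Continuous f' →
      (∀ y₁ y₂, π y₁ = π y₂ → f y₂ - f y₁ = (lam y₁ y₂ : ℝ)) →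
      (∀ y₁ y₂, π y₁ = π y₂ → f' y₂ - f' y₁ = (lam y₁ y₂ : ℝ)) →
      ∃ u : M → ℝ, Continuous u ∧ ∀ y, f' y = f y + u (π y)) := by
  constructor
  · obtain ⟨ρ, hρ⟩ := PartitionOfUnity.exists_isSubordinate isClosed_univ U hUopen hUcover.ge
    set σ := pullbackPartition ρ ⟨π, hπcont⟩
    have hσ : σ.IsSubordinate fun α => π ⁻¹' U α := fun α =>
      (tsupport_comp_subset_preimage (ρ α) hπcont).trans (Set.preimage_mono (hρ α))
    have hcoeff : ∀ α, ContinuousOn (fun y => (lam (s α (π y)) y : ℝ)) (π ⁻¹' U α) := by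
      intro α
      rw [continuousOn_iff_continuous_domRestrict]
      have h1 : Continuous fun y : π ⁻¹' U α => s α (π y) :=
        (hscont α).comp_continuous (hπcont.comp continuous_subtype_val) fun y => y.2
      have h2 : Continuous fun y : π ⁻¹' U α =>
          (⟨(s α (π y), y), hsec α _ y.2⟩ : {p : Y × Y // π p.1 = π p.2}) :=
        (h1.prodMk continuous_subtype_val).subtype_mk _
      exact (continuous_of_discreteTopology (f := fun n : ℤ => (n : ℝ))).comp (hlamcont.comp h2)
    refine ⟨fun y => ∑ᶠ α, σ α y • (lam (s α (π y)) y : ℝ),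
      hσ.continuous_finsum_smul (fun α => (hUopen α).preimage hπcont) hcoeff, ?_⟩
    intro y₁ y₂ h
    have hfin : ∀ (y : Y) (g : ι → ℝ), (Function.support fun α => σ α y • g α).Finite :=
      fun y g => (σ.locallyFinite.point_finite y).subset fun α hα =>
        left_ne_zero_of_smul hα
    have hσeq : ∀ α, σ α y₁ = σ α y₂ := fun α => congrArg (ρ α) h
    have hterm : ∀ α, σ α y₂ • (lam (s α (π y₂)) y₂ : ℝ) - σ α y₁ • (lam (s α (π y₁)) y₁ : ℝ)
        = σ α y₂ * (lam y₁ y₂ : ℝ) := by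
      intro α
      rw [hσeq α, h, ← smul_sub, smul_eq_mul]
      by_cases h0 : σ α y₂ = 0
      · simp [h0]
      · have hU : π y₂ ∈ U α := hσ α (subset_tsupport _ h0)
        have hc := hcoc (s α (π y₂)) y₁ y₂ ((hsec α _ hU).trans h.symm) h
        rw [← hc]
        push_cast
        ring
    rw [← finsum_sub_distrib (hfin y₂ _) (hfin y₁ _), finsum_congr hterm,
      ← finsum_mul' _ _ (σ.locallyFinite.point_finite y₂), σ.sum_eq_one (Set.mem_univ y₂), one_mul]
  · intro f f' hf hf' hcf hcf'
    have hconst : ∀ y₁ y₂, π y₁ = π y₂ → f' y₁ - f y₁ = f' y₂ - f y₂ := fun y₁ y₂ h => by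
      linarith [hcf y₁ y₂ h, hcf' y₁ y₂ h]
    let r := Function.surjInv hπsurj
    have hr : ∀ m, π (r m) = m := Function.surjInv_eq hπsurj
    refine ⟨fun m => f' (r m) - f (r m), ?_, fun y => ?_⟩
    · rw [continuous_iff_continuousAt]
      intro m
      obtain ⟨α, hα⟩ := Set.mem_iUnion.1 (hUcover ▸ Set.mem_univ m)
      have hcont : ContinuousOn (fun x => f' (s α x) - f (s α x)) (U α) :=
        (hf'.sub hf).comp_continuousOn (hscont α)
      -- The global choice `r` may be discontinuous, but over `U α` it can be replaced by `s α`.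
      refine (hcont.congr fun x hx => ?_).continuousAt ((hUopen α).mem_nhds hα)
      exact hconst _ _ ((hr x).trans (hsec α x hx).symm)
    · have := hconst (r (π y)) y (hr (π y))
      linarith
end

section
/- Let M be a set, {U_α}_{α∈I} a family of subsets of M, and r ≥ 1 a natural number. Suppose given invertible r×r complex matrices h_{αβ}(m) for each α,β ∈ I and m ∈ U_α ∩ U_β, and nonzero scalars g_{αβγ}(m) ∈ ℂˣ for each α,β,γ ∈ I and m ∈ U_α ∩ U_β ∩ U_γ, satisfying the bundle gerbe module relation h_{αβ}(m)·h_{βγ}(m) = g_{αβγ}(m)·h_{αγ}(m) (scalar multiple of the matrix). Then: (i) g satisfies the Čech 2-cocycle identity g_{βγδ}(m)·g_{αβδ}(m) = g_{αγδ}(m)·g_{αβγ}(m) for all m ∈ U_α ∩ U_β ∩ U_γ ∩ U_δ; and (ii) det(h_{αβ}(m))·det(h_{βγ}(m)) = g_{αβγ}(m)^r·det(h_{αγ}(m)) for all m ∈ U_α ∩ U_β ∩ U_γ, so that the 2-cochain g^r is the Čech coboundary of the family (det h_{αβ}). This is the local-data form of the proposition that a bundle gerbe admitting a rank-r bundle gerbe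 module is torsion with r·dd(P) = 0. -/
/-!
The cocycle identity is associativity of matrix multiplication: the two bracketings of
`h_{αβ} h_{βγ} h_{γδ}` are scalar multiples of the same nonzero matrix `h_{αδ}`, so the scalars
agree. The coboundary identity is the determinant of the module relation, since scaling an
`r × r` matrix by `c` scales its determinant by `c ^ r`.
-/

/-- Local data of a rank-`r` bundle gerbe module: if invertible
`r × r` complex matrices `h_{αβ}` and nonzero scalars `g_{αβγ}` satisfy
`h_{αβ} · h_{βγ} = g_{αβγ} • h_{αγ}` on overlaps, then (i) `g` is a Čech 2-cocycle and
(ii) taking determinants shows `g^r` is the Čech coboundary of `(det h_{αβ})`, i.e. the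
underlying bundle gerbe is torsion with `r·dd(P) = 0`. -/
theorem bundle_gerbe_module_torsion
    {M ι : Type*} (r : ℕ) (hr : 1 ≤ r)
    (U : ι → Set M)
    (h : ι → ι → M → Matrix (Fin r) (Fin r) ℂ)
    (g : ι → ι → ι → M → ℂ)
    (hunit : ∀ α β, ∀ m ∈ U α ∩ U β, IsUnit (h α β m))
    (hne : ∀ α β γ, ∀ m ∈ U α ∩ U β ∩ U γ, g α β γ m ≠ 0)
    (hrel : ∀ α β γ, ∀ m ∈ U α ∩ U β ∩ U γ,
      h α β m * h β γ m = g α β γ m • h α γ m) :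
    -- (i) the Čech 2-cocycle identity for g
    (∀ α β γ δ, ∀ m ∈ U α ∩ U β ∩ U γ ∩ U δ,
      g β γ δ m * g α β δ m = g α γ δ m * g α β γ m) ∧
    -- (ii) g^r is the Čech coboundary of (det h)
    (∀ α β γ, ∀ m ∈ U α ∩ U β ∩ U γ,
      (h α β m).det * (h β γ m).det = g α β γ m ^ r * (h α γ m).det) := by
  constructor
  · rintro α β γ δ m ⟨⟨⟨ha, hb⟩, hc⟩, hd⟩
    -- `1 ≤ r` makes the matrix ring nontrivial, so the unit `h α δ m` is nonzero.
    have : Nonempty (Fin r) := ⟨⟨0, hr⟩⟩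
    have hne0 : h α δ m ≠ 0 := (hunit α δ m ⟨ha, hd⟩).ne_zero
    apply smul_left_injective ℂ hne0
    -- Both sides are the two bracketings of `h α β m * h β γ m * h γ δ m`.
    calc (g β γ δ m * g α β δ m) • h α δ m
        = h α β m * (h β γ m * h γ δ m) := by
          rw [hrel β γ δ m ⟨⟨hb, hc⟩, hd⟩, Matrix.mul_smul,
            hrel α β δ m ⟨⟨ha, hb⟩, hd⟩, smul_smul]
      _ = (h α β m * h β γ m) * h γ δ m := (Matrix.mul_assoc _ _ _).symm
      _ = (g α γ δ m * g α β γ m) • h α δ m := by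
          rw [hrel α β γ m ⟨⟨ha, hb⟩, hc⟩, Matrix.smul_mul,
            hrel α γ δ m ⟨⟨ha, hc⟩, hd⟩, smul_smul, mul_comm]
  · intro α β γ m hm
    rw [← Matrix.det_mul, hrel α β γ m hm, Matrix.det_smul, Fintype.card_fin]
end

section
/- Define a relation on ℝ × ℝ × U(1) by (a,b,z) ≈ (a′,b′,z′) if and only if a − a′ ∈ ℤ, b − b′ ∈ ℤ, and z′ = z·e((a−a′)·b′) (equivalently, (a+n, b+m, z) ≈ (a, b, z·e(n·b)) for all n,m ∈ ℤ). Then: (i) ≈ is an equivalence relation; (ii) the partial product ((a₁,b₁,z₁),(a₂,b₂,z₂)) ↦ (a₁, b₁+b₂, z₁·z₂·e(b₂·(a₂−a₁))), defined whenever a₂ − a₁ ∈ ℤ, is compatible with ≈: if (aᵢ,bᵢ,zᵢ) ≈ (aᵢ′,bᵢ′,zᵢ′) for i = 1,2 and a₂ − a₁ ∈ ℤ, then a₂′ − a₁′ ∈ ℤ and the two products are ≈-related. (This proves that the bundle gerbe product of the cup-product bundle gerbe f ∪ L is well defined on the total space (ℝ × ℝ × U(1))/≈ of the cup-product bundle.)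 -/
/-! The relation and the product only involve the character `eChar` of `ℝ`, whose kernel
contains `ℤ`, so each identity between circle components reduces to a congruence modulo `ℤ`
between exponents (`eChar_congr`). For symmetry and
transitivity the two exponents differ by a product of an integer shift of the first coordinate
and one of the second. For the product, with
`k = a₂ - a₁`, the shifts of `a₁` and `a₂` cancel exactly and the exponents differ,
up to sign, by `k * (b₂ - b₂')`, an integer because the pair is composable. -/

/-- The standard character `e(t) = exp(2πi·t)` of `ℝ` with values in `U(1)`. -/
noncomputable def eChar (t : ℝ) : Circle := Circle.exp (2 * Real.pi * t)

/-- The relation on `ℝ × ℝ × U(1)` defining the total space of the cup-product bundle: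
`(a, b, z) ≈ (a′, b′, z′)` iff `a − a′ ∈ ℤ`, `b − b′ ∈ ℤ` and `z′ = z·e((a−a′)·b′)`. -/
noncomputable def cupRel (x y : ℝ × ℝ × Circle) : Prop :=
  (∃ n : ℤ, x.1 - y.1 = n) ∧ (∃ m : ℤ, x.2.1 - y.2.1 = m) ∧
    y.2.2 = x.2.2 * eChar ((x.1 - y.1) * y.2.1)

/-- The partial bundle gerbe product of the cup-product bundle gerbe `f ∪ L`, meaningful
when `a₂ − a₁ ∈ ℤ`:  `(a₁,b₁,z₁)·(a₂,b₂,z₂) = (a₁, b₁+b₂, z₁·z₂·e(b₂·(a₂−a₁)))`. -/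
noncomputable def cupProd (x y : ℝ × ℝ × Circle) : ℝ × ℝ × Circle :=
  (x.1, x.2.1 + y.2.1, x.2.2 * y.2.2 * eChar (y.2.1 * (y.1 - x.1)))

lemma eChar_add (s t : ℝ) : eChar (s + t) = eChar s * eChar t := by
  simp only [eChar, mul_add, Circle.exp_add]

lemma eChar_int (n : ℤ) : eChar n = 1 := by
  rw [eChar, mul_comm]
  exact Circle.exp_int_mul_two_pi n

lemma eChar_congr {s t : ℝ} (n : ℤ) (h : s = t + n) : eChar s = eChar t := by
  rw [h, eChar_add, eChar_int, mul_one]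

lemma cupRel_equivalence : Equivalence cupRel where
  refl x := ⟨⟨0, by simp⟩, ⟨0, by simp⟩, by simp [eChar]⟩
  symm := by
    rintro ⟨a, b, z⟩ ⟨a', b', z'⟩ ⟨⟨n, hn⟩, ⟨m, hm⟩, hz⟩
    dsimp only at hn hm hz
    refine ⟨⟨-n, by push_cast; linarith⟩, ⟨-m, by push_cast; linarith⟩, ?_⟩
    dsimp only
    rw [hz, mul_assoc, ← eChar_add, eChar_congr (t := 0) (-(n * m))]
    · simp [eChar]
    · push_cast
      rw [← hn, ← hm]
      ring
  trans := by
    rintro ⟨a, b, z⟩ ⟨a', b', z'⟩ ⟨a'', b'', z''⟩ ⟨⟨n, hn⟩, ⟨m, hm⟩, hz⟩ ⟨⟨p, hp⟩, ⟨q, hq⟩, hw⟩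
    dsimp only at hn hm hz hp hq hw
    refine ⟨⟨n + p, by push_cast; linarith⟩, ⟨m + q, by push_cast; linarith⟩, ?_⟩
    dsimp only
    rw [hw, hz, mul_assoc, ← eChar_add]
    congr 1
    apply eChar_congr (n * q)
    push_cast
    rw [← hn, ← hq]
    ring

/-- The relation `≈` on `ℝ × ℝ × U(1)` is an equivalence relation, and
the bundle gerbe product of the cup-product bundle gerbe `f ∪ L` is compatible with it:
if `xᵢ ≈ xᵢ′` (`i = 1, 2`) and the pair `(x₁, x₂)` is composable (`a₂ − a₁ ∈ ℤ`), then
`(x₁′, x₂′)` is composable and the two products are `≈`-related. -/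
theorem cup_product_bundle_gerbe_product_well_defined :
    Equivalence cupRel ∧
    (∀ x₁ x₁' x₂ x₂' : ℝ × ℝ × Circle,
      cupRel x₁ x₁' → cupRel x₂ x₂' → (∃ k : ℤ, x₂.1 - x₁.1 = k) →
      (∃ k : ℤ, x₂'.1 - x₁'.1 = k) ∧ cupRel (cupProd x₁ x₂) (cupProd x₁' x₂')) := by
  refine ⟨cupRel_equivalence, ?_⟩
  rintro ⟨a₁, b₁, z₁⟩ ⟨a₁', b₁', z₁'⟩ ⟨a₂, b₂, z₂⟩ ⟨a₂', b₂', z₂'⟩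
    ⟨⟨n₁, hn₁⟩, ⟨m₁, hm₁⟩, hz₁⟩ ⟨⟨n₂, hn₂⟩, ⟨m₂, hm₂⟩, hz₂⟩ ⟨k, hk⟩
  dsimp only at hn₁ hm₁ hz₁ hn₂ hm₂ hz₂ hk
  refine ⟨⟨k - n₂ + n₁, by push_cast; linarith⟩, ⟨n₁, hn₁⟩,
    ⟨m₁ + m₂, by simp only [cupProd]; push_cast; linarith⟩, ?_⟩
  simp only [cupProd]
  -- Collect all characters on each side into one and compare the exponents modulo `ℤ`.
  calc z₁' * z₂' * eChar (b₂' * (a₂' - a₁'))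
      = z₁ * z₂ * eChar ((a₁ - a₁') * b₁' + (a₂ - a₂') * b₂' + b₂' * (a₂' - a₁')) := by
        rw [hz₁, hz₂, eChar_add, eChar_add]
        simp only [mul_assoc, mul_left_comm]
    _ = z₁ * z₂ * eChar (b₂ * (a₂ - a₁) + (a₁ - a₁') * (b₁' + b₂')) := by
        congr 1
        apply eChar_congr (-(k * m₂))
        push_cast
        rw [← hk, ← hm₂]
        ring
    _ = z₁ * z₂ * eChar (b₂ * (a₂ - a₁)) * eChar ((a₁ - a₁') * (b₁' + b₂')) := by
        rw [eChar_add, mul_assoc (z₁ * z₂)]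
end
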